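/- If k ≥ 2 and n ≥ 6(k−1), then the independence complex Ind(C^k_n) is c_{n,k}-connected, where c_{n,k} = ⌊(n+1)/(2k−1) − 2⌋. -/

import Mathlib

open SimpleGraph

/-- A claw in `G` on center `u` and leaves `v₁, v₂, v₃`. -/
def SimpleGraph.IsClaw {V : Type*} (G : SimpleGraph V) (u v₁ v₂ v₃ : V) : Prop :=
  v₁ ≠ v₂ ∧ v₁ ≠ v₃ ∧ v₂ ≠ v₃ ∧
  G.Adj u v₁ ∧ G.Adj u v₂ ∧ G.Adj u v₃ ∧
  ¬G.Adj v₁ v₂ ∧ ¬G.Adj v₁ v₃ ∧ ¬G.Adj v₂ v₃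

/-- A graph is claw-free if it has no induced claw. -/
def SimpleGraph.ClawFree {V : Type*} (G : SimpleGraph V) : Prop :=
  ∀ u v₁ v₂ v₃ : V, ¬ G.IsClaw u v₁ v₂ v₃

/-- The closed neighborhood `Ṅ(v) = N(v) ∪ {v}`. -/
def SimpleGraph.closedNbhd {V : Type*} (G : SimpleGraph V) (v : V) : Set V :=
  insert v (G.neighborSet v)

/-- The set of faces of the independence complex `Ind(G)`. -/
def indepFaces {V : Type*} (G : SimpleGraph V) : Set (Finset V) :=
  {s | ∀ a ∈ s, ∀ b ∈ s, ¬ G.Adj a b}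

/-- The geometric realization of an abstract simplicial complex with vertex set `V`. -/
def realization {V : Type*} (K : Set (Finset V)) : Type _ :=
  {f : V → ℝ // (∀ v, 0 ≤ f v) ∧ (∑ᶠ v, f v) = 1 ∧ ∃ s ∈ K, {v | f v ≠ 0} = ↑s}

instance {V : Type*} (K : Set (Finset V)) : TopologicalSpace (realization K) :=
  instTopologicalSpaceSubtype

/-- A space is `n`-connected (`n : ℤ`) if it is nonempty when `n ≥ -1` and every continuous
map from the `i`-sphere extends to the `(i+1)`-ball for all `0 ≤ i ≤ n`. -/
def IsNConnected (n : ℤ) (X : Type*) [TopologicalSpace X] : Prop :=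
  (-1 ≤ n → Nonempty X) ∧
  ∀ i : ℕ, (i : ℤ) ≤ n →
    ∀ f : C(Metric.sphere (0 : EuclideanSpace ℝ (Fin (i + 1))) 1, X),
      ∃ g : C(Metric.closedBall (0 : EuclideanSpace ℝ (Fin (i + 1))) 1, X),
        ∀ x : Metric.sphere (0 : EuclideanSpace ℝ (Fin (i + 1))) 1,
          g ⟨x.1, Metric.sphere_subset_closedBall x.2⟩ = f x

/-- Relation generating the unreduced suspension: glue `X × {0}` to a south pole and
`X × {1}` to a north pole. -/
def SuspRel (X : Type*) : X × unitInterval ⊕ Bool → X × unitInterval ⊕ Bool → Prop :=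
  fun a b => (∃ x, a = Sum.inl (x, 0) ∧ b = Sum.inr false) ∨
    (∃ x, a = Sum.inl (x, 1) ∧ b = Sum.inr true)

/-- The unreduced suspension of a space. -/
def Susp (X : Type*) [TopologicalSpace X] : Type _ := Quot (SuspRel X)

instance (X : Type*) [TopologicalSpace X] : TopologicalSpace (Susp X) :=
  instTopologicalSpaceQuot

/-- The north pole of a suspension. -/
def Susp.north (X : Type*) [TopologicalSpace X] : Susp X := Quot.mk _ (Sum.inr true)

/-- Relation generating the wedge sum of a family of pointed spaces. -/
def WedgeRel {ι : Type*} (X : ι → Type*) (pt : ∀ i, X i) :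
    (Σ i, X i) ⊕ Unit → (Σ i, X i) ⊕ Unit → Prop :=
  fun a b => ∃ i, a = Sum.inl ⟨i, pt i⟩ ∧ b = Sum.inr ()

/-- The wedge sum of a family of pointed spaces. -/
def Wedge {ι : Type*} (X : ι → Type*) [∀ i, TopologicalSpace (X i)] (pt : ∀ i, X i) :
    Type _ :=
  Quot (WedgeRel X pt)

instance {ι : Type*} (X : ι → Type*) [∀ i, TopologicalSpace (X i)] (pt : ∀ i, X i) :
    TopologicalSpace (Wedge X pt) :=
  instTopologicalSpaceQuot

/-- The graph `L^k_n`: vertices `{1, …, n}`, with `i < j` adjacent iff `j - i < k`. -/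
def lineGraphL (n k : ℕ) : SimpleGraph (Fin n) :=
  SimpleGraph.fromRel (fun i j => (i : ℕ) < j ∧ (j : ℕ) - i < k)

/-- The graph `C^k_n`: vertices `{1, …, n}`, with `i < j` adjacent iff `j - i < k` or
`(n + i) - j < k`. -/
def circGraphC (n k : ℕ) : SimpleGraph (Fin n) :=
  SimpleGraph.fromRel (fun i j => (i : ℕ) < j ∧ ((j : ℕ) - i < k ∨ (n + i) - j < k))

/-- One elementary collapse step: remove a free face `σ` together with the unique face
`τ` properly containing it (with `τ` of one dimension higher). -/
def ElemCollapse {V : Type*} (K L : Set (Finset V)) : Prop :=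
  ∃ σ τ : Finset V, σ ∈ K ∧ τ ∈ K ∧ σ ⊂ τ ∧ τ.card = σ.card + 1 ∧
    (∀ ρ ∈ K, σ ⊂ ρ → ρ = τ) ∧ L = K \ {σ, τ}

/-- `K` collapses onto `L` if there is a finite sequence of elementary collapses from
`K` to `L`. -/
def Collapses {V : Type*} (K L : Set (Finset V)) : Prop :=
  Relation.ReflTransGen ElemCollapse K L

/-!
The independence complex of the subgraph induced on `S` arises from that on `S \ {v}` by attaching
a cone over the complex on `S` without the closed neighborhood of `v`. Hence it is `c`-connected
as soon as the deletion is `c`-connected and the link is `(c - 1)`-connected. In the `k`-th power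
of a path, deleting the neighbors of an end vertex isolates that vertex, which leaves a cone; the
link of a deleted neighbor is a path with at most `2k - 1` fewer vertices. So every `2k - 1`
vertices gain one degree of connectivity. In `C^k_n`, deleting `k - 1` consecutive vertices leaves
a path of `n - k + 1` vertices, and the links are paths of `n - 2k + 1` vertices.

The gluing step does not need homology or the Seifert–van Kampen theorem. Suppose that a space is
the union of two open sets, and that a map from the boundary of a cube into it is given. Subdivide
the cube into a fine cubical grid, so that each grid cell can be assigned to one of the two sets
compatibly with the boundary values, and extend the map over the grid face by face, keeping each
face inside all the sets assigned to the cells around it. Only faces of less than full dimension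
lie between cells with different assignments, so the intersection may be one degree less
connected.
-/

open Set Metric

section ExtendsSelections

variable {E E' Y : Type*} [TopologicalSpace E] [TopologicalSpace E'] [TopologicalSpace Y]

/-- Every continuous selection over `L` of the set-valued map `φ` extends to a continuous selection
over `K`. For constant `φ = fun _ => C` this is the extension property of maps into `C`. -/
def ExtendsSelections (φ : E → Set Y) (L K : Set E) : Prop :=
  ∀ f : E → Y, ContinuousOn f L → (∀ x ∈ L, f x ∈ φ x) →
    ∃ g : E → Y, ContinuousOn g K ∧ (∀ x ∈ K, g x ∈ φ x) ∧ EqOn g f L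

theorem exists_continuousOn_union_of_eqOn_inter {f g : E → Y} {K L : Set E} (hK : IsClosed K)
    (hL : IsClosed L) (hf : ContinuousOn f K) (hg : ContinuousOn g L) (hfg : EqOn f g (K ∩ L)) :
    ∃ h : E → Y, ContinuousOn h (K ∪ L) ∧ EqOn h f K ∧ EqOn h g L := by
  classical
  have hKf : EqOn (K.piecewise f g) f K := piecewise_eqOn K f g
  have hLg : EqOn (K.piecewise f g) g L := fun x hx => by
    by_cases hxK : x ∈ K
    · rw [hKf hxK, hfg ⟨hxK, hx⟩]
    · exact piecewise_eq_of_notMem K f g hxK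
  exact ⟨_, (hf.congr hKf).union_of_isClosed (hg.congr hLg) hK hL, hKf, hLg⟩

theorem ExtendsSelections.of_leftInvOn {φ : E → Set Y} {φ' : E' → Set Y} {L K : Set E}
    {L' K' : Set E'} {p : E → E'} {q : E' → E} (h : ExtendsSelections φ L K)
    (hp : ContinuousOn p L) (hpL : MapsTo p L L') (hφ : ∀ x ∈ L, φ' (p x) ⊆ φ x)
    (hq : ContinuousOn q K') (hqK : MapsTo q K' K) (hqL : MapsTo q L' L)
    (hφ' : ∀ x ∈ K', φ (q x) ⊆ φ' x) (hpq : LeftInvOn p q L') : ExtendsSelections φ' L' K' := by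
  intro f hf hfφ
  obtain ⟨g, hg, hgφ, hgf⟩ := h (f ∘ p) (hf.comp hp hpL) fun x hx => hφ x hx (hfφ _ (hpL hx))
  exact ⟨g ∘ q, hg.comp hq hqK, fun x hx => hφ' x hx (hgφ _ (hqK hx)), fun x hx =>
    (hgf (hqL hx)).trans (congrArg f (hpq hx))⟩

theorem extendsSelections_image_iff {φ : E' → Set Y} {L K : Set E} (e : E ≃ₜ E') :
    ExtendsSelections φ (e '' L) (e '' K) ↔ ExtendsSelections (φ ∘ e) L K := by
  have hsymm (s : Set E) : MapsTo e.symm (e '' s) s := by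
    rintro _ ⟨x, hx, rfl⟩
    simpa using hx
  refine ⟨fun h => ?_, fun h => ?_⟩
  · exact h.of_leftInvOn e.symm.continuous.continuousOn (hsymm L)
      (fun x _ => by simp) e.continuous.continuousOn
      (mapsTo_image e K) (mapsTo_image e L) (fun x _ => Subset.rfl) fun x _ => e.symm_apply_apply x
  · exact h.of_leftInvOn e.continuous.continuousOn (mapsTo_image e L)
      (fun x _ => Subset.rfl) e.symm.continuous.continuousOn (hsymm K) (hsymm L)
      (fun x _ => by simp) fun x _ => e.apply_symm_apply x

theorem ExtendsSelections.of_const {φ : E → Set Y} {C : Set Y} {L K : Set E}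
    (h : ExtendsSelections (fun _ => C) L K) (hφC : ∀ x ∈ L, φ x ⊆ C)
    (hCφ : ∀ x ∈ K \ L, C ⊆ φ x) : ExtendsSelections φ L K := by
  intro f hf hfφ
  obtain ⟨g, hg, hgC, hgf⟩ := h f hf fun x hx => hφC x hx (hfφ x hx)
  refine ⟨g, hg, fun x hx => ?_, hgf⟩
  by_cases hxL : x ∈ L
  · exact hgf hxL ▸ hfφ x hxL
  · exact hCφ x ⟨hx, hxL⟩ (hgC x hx)

theorem ExtendsSelections.union {φ : E → Set Y} {L K₁ K₂ : Set E} (hL : IsClosed L)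
    (hK₁ : IsClosed K₁) (hK₂ : IsClosed K₂) (hLK : L ⊆ K₁ ∪ K₂)
    (h : ExtendsSelections φ (L ∩ (K₁ ∩ K₂)) (K₁ ∩ K₂))
    (h₁ : ExtendsSelections φ (L ∩ K₁ ∪ K₁ ∩ K₂) K₁)
    (h₂ : ExtendsSelections φ (L ∩ K₂ ∪ K₁ ∩ K₂) K₂) : ExtendsSelections φ L (K₁ ∪ K₂) := by
  intro f hf hfφ
  obtain ⟨g, hg, hgφ, hgf⟩ := h f (hf.mono inter_subset_left) fun x hx => hfφ x hx.1
  obtain ⟨f', hf', hf'f, hf'g⟩ := exists_continuousOn_union_of_eqOn_inter hL (hK₁.inter hK₂) hf hg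
    hgf.symm
  have hf'φ : ∀ x ∈ L ∪ K₁ ∩ K₂, f' x ∈ φ x := by
    rintro x (hx | hx)
    · exact hf'f hx ▸ hfφ x hx
    · exact hf'g hx ▸ hgφ x hx
  have hsub (K : Set E) : L ∩ K ∪ K₁ ∩ K₂ ⊆ L ∪ K₁ ∩ K₂ :=
    union_subset_union_left _ inter_subset_left
  obtain ⟨g₁, hg₁, hg₁φ, hg₁f⟩ := h₁ f' (hf'.mono (hsub K₁)) fun x hx => hf'φ x (hsub K₁ hx)
  obtain ⟨g₂, hg₂, hg₂φ, hg₂f⟩ := h₂ f' (hf'.mono (hsub K₂)) fun x hx => hf'φ x (hsub K₂ hx)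
  obtain ⟨G, hG, hGg₁, hGg₂⟩ := exists_continuousOn_union_of_eqOn_inter hK₁ hK₂ hg₁ hg₂
    fun x hx => (hg₁f (Or.inr hx)).trans (hg₂f (Or.inr hx)).symm
  refine ⟨G, hG, ?_, fun x hx => ?_⟩
  · rintro x (hx | hx)
    · exact hGg₁ hx ▸ hg₁φ x hx
    · exact hGg₂ hx ▸ hg₂φ x hx
  · rcases hLK hx with hxK | hxK
    · rw [hGg₁ hxK, hg₁f (Or.inl ⟨hx, hxK⟩), hf'f hx]
    · rw [hGg₂ hxK, hg₂f (Or.inl ⟨hx, hxK⟩), hf'f hx]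

end ExtendsSelections

section FillsSphere

variable {Y : Type*} [TopologicalSpace Y] {C : Set Y}

/-- Every map from the unit sphere of `ℝᵈ` into `C` extends to a map from the closed unit ball
into `C`. The sphere is empty for `d = 0`, so `FillsSphere 0 C` says that `C` is nonempty. -/
def FillsSphere (d : ℕ) (C : Set Y) : Prop :=
  ExtendsSelections (fun _ => C) (sphere (0 : EuclideanSpace ℝ (Fin d)) 1) (closedBall 0 1)

/-- The set `C` is `(m - 2)`-connected. The index counts the dimensions `d < m` of the balls that
can be filled, which avoids negative numbers. -/
def FillsSpheresBelow (m : ℕ) (C : Set Y) : Prop :=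
  ∀ d < m, FillsSphere d C

/-- All convex bodies of the same dimension are homeomorphic as pairs with their frontiers. -/
theorem fillsSphere_finrank_iff {E : Type*} [NormedAddCommGroup E] [NormedSpace ℝ E]
    [FiniteDimensional ℝ E] {s : Set E} (hs : IsCompact s) (hconv : Convex ℝ s)
    (hint : (interior s).Nonempty) :
    FillsSphere (Module.finrank ℝ E) C ↔ ExtendsSelections (fun _ => C) (frontier s) s := by
  let e : E ≃ₜ EuclideanSpace ℝ (Fin (Module.finrank ℝ E)) := toEuclidean.toHomeomorph
  obtain ⟨h, -, hcl, hfr⟩ := exists_homeomorph_image_interior_closure_frontier_eq_unitBall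
    (s := e '' s) (hconv.linear_image (toEuclidean (E := E)).toLinearMap)
    (by rw [← e.image_interior]; exact hint.image _) (hs.image e.continuous).isBounded
  rw [← e.image_closure, hs.isClosed.closure_eq] at hcl
  rw [← e.image_frontier] at hfr
  let t : E ≃ₜ EuclideanSpace ℝ (Fin (Module.finrank ℝ E)) := e.trans h
  have hball : t '' s = closedBall 0 1 := by rw [← hcl, image_image]; rfl
  have hsphere : t '' frontier s = sphere 0 1 := by rw [← hfr, image_image]; rfl
  rw [FillsSphere, ← hball, ← hsphere, extendsSelections_image_iff]
  rfl

end FillsSphere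

section Box

variable {ι Y : Type*} [TopologicalSpace Y] {C : Set Y} {a b : ι → ℝ}

/-- The relative boundary of the box `Icc a b`, which may be degenerate: coordinates `i` with
`a i = b i` do not count. -/
def boxBoundary (a b : ι → ℝ) : Set (ι → ℝ) :=
  {x ∈ Icc a b | ∃ i, a i < b i ∧ (x i = a i ∨ x i = b i)}

theorem isClosed_boxBoundary [Finite ι] (a b : ι → ℝ) : IsClosed (boxBoundary a b) := by
  have h : boxBoundary a b =
      Icc a b ∩ ⋃ i : {i // a i < b i}, {x | x i = a i} ∪ {x | x i = b i} := by
    ext x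
    simp [boxBoundary]
  rw [h]
  exact isClosed_Icc.inter <| isClosed_iUnion_of_finite fun i =>
    (isClosed_eq (continuous_apply _) continuous_const).union
      (isClosed_eq (continuous_apply _) continuous_const)

theorem interior_Icc_pi [Finite ι] (a b : ι → ℝ) :
    interior (Icc a b) = univ.pi fun i => Ioo (a i) (b i) := by
  rw [← pi_univ_Icc, interior_pi_set finite_univ]
  simp only [interior_Icc]

theorem frontier_Icc_eq_boxBoundary [Finite ι] (hab : ∀ i, a i < b i) :
    frontier (Icc a b) = boxBoundary a b := by
  rw [isClosed_Icc.frontier_eq, interior_Icc_pi]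
  ext x
  simp only [boxBoundary, mem_sdiff, mem_univ_pi, not_forall, mem_Ioo, not_and_or, not_lt,
    mem_ofPred_eq]
  refine and_congr_right fun hx => exists_congr fun i => ?_
  rw [and_iff_right (hab i), (hx.1 i).ge_iff_eq', (hx.2 i).ge_iff_eq', eq_comm (a := b i)]

theorem fillsSphere_card_iff_box [Fintype ι] (hab : ∀ i, a i < b i) :
    FillsSphere (Fintype.card ι) C ↔
      ExtendsSelections (fun _ => C) (boxBoundary a b) (Icc a b) := by
  have hint : (interior (Icc a b)).Nonempty := by
    rw [interior_Icc_pi]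
    exact univ_pi_nonempty_iff.2 fun i => nonempty_Ioo.2 (hab i)
  rw [← frontier_Icc_eq_boxBoundary hab, ← Module.finrank_fintype_fun_eq_card ℝ]
  exact fillsSphere_finrank_iff isCompact_Icc (convex_Icc a b) hint

theorem FillsSphere.extendsSelections_box [Finite ι] (hab : a ≤ b)
    (hC : FillsSphere {i | a i < b i}.ncard C) :
    ExtendsSelections (fun _ => C) (boxBoundary a b) (Icc a b) := by
  classical
  have := Fintype.ofFinite ι
  let J := {i // a i < b i}
  let p : (J → ℝ) → ι → ℝ := fun y i => if h : a i < b i then y ⟨i, h⟩ else a i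
  let q : (ι → ℝ) → J → ℝ := fun x j => x j
  have hp : Continuous p := continuous_pi fun i => by
    by_cases h : a i < b i <;> simp only [p, h, dite_true, dite_false] <;> fun_prop
  have hq : Continuous q := by fun_prop
  have hJ : ExtendsSelections (fun _ => C) (boxBoundary (q a) (q b)) (Icc (q a) (q b)) := by
    refine (fillsSphere_card_iff_box fun j => j.2).1 ?_
    rwa [← Nat.card_eq_fintype_card]
  have hqK : MapsTo q (Icc a b) (Icc (q a) (q b)) := fun x hx =>
    ⟨fun j => hx.1 j, fun j => hx.2 j⟩
  refine hJ.of_leftInvOn hp.continuousOn ?_ (fun _ _ => Subset.rfl) hq.continuousOn hqK ?_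
    (fun _ _ => Subset.rfl) ?_
  · rintro y ⟨hy, j, -, hyj⟩
    refine ⟨⟨fun i => ?_, fun i => ?_⟩, j, j.2, by simpa [p, j.2] using hyj⟩
    · by_cases h : a i < b i
      · simpa [p, h] using hy.1 ⟨i, h⟩
      · simp [p, h]
    · by_cases h : a i < b i
      · simpa [p, h] using hy.2 ⟨i, h⟩
      · simpa [p, h] using hab i
  · rintro x ⟨hx, i, hi, hxi⟩
    exact ⟨hqK hx, ⟨i, hi⟩, hi, hxi⟩
  · rintro x ⟨hx, -⟩
    funext i
    by_cases h : a i < b i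
    · simp [p, q, h]
    · simpa [p, h] using le_antisymm (hx.1 i) ((hx.2 i).trans (not_lt.1 h))

variable [DecidableEq ι] {i : ι} {c : ℝ}

theorem mem_Icc_update_left (hc : a i ≤ c) {x : ι → ℝ} :
    x ∈ Icc (Function.update a i c) b ↔ x ∈ Icc a b ∧ c ≤ x i := by
  simp only [mem_Icc, Pi.le_def]
  grind

theorem mem_Icc_update_right (hc : c ≤ b i) {x : ι → ℝ} :
    x ∈ Icc a (Function.update b i c) ↔ x ∈ Icc a b ∧ x i ≤ c := by
  simp only [mem_Icc, Pi.le_def]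
  grind

theorem ExtendsSelections.box_of_cut [Finite ι] {φ : (ι → ℝ) → Set Y} (hac : a i < c)
    (hcb : c < b i)
    (h : ExtendsSelections φ (boxBoundary (Function.update a i c) (Function.update b i c))
      (Icc (Function.update a i c) (Function.update b i c)))
    (h₁ : ExtendsSelections φ (boxBoundary a (Function.update b i c))
      (Icc a (Function.update b i c)))
    (h₂ : ExtendsSelections φ (boxBoundary (Function.update a i c) b)
      (Icc (Function.update a i c) b)) :
    ExtendsSelections φ (boxBoundary a b) (Icc a b) := by
  have hK {x} := mem_Icc_update_right (a := a) hcb.le (x := x)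
  have hK' {x} := mem_Icc_update_left (b := b) hac.le (x := x)
  have hM {x} : x ∈ Icc (Function.update a i c) (Function.update b i c) ↔
      x ∈ Icc a b ∧ x i = c := by
    rw [mem_Icc_update_left hac.le, hK, and_assoc, ← le_antisymm_iff]
  have hunion : Icc a b = Icc a (Function.update b i c) ∪ Icc (Function.update a i c) b := by
    ext x
    rw [mem_union, hK, hK', ← and_or_left, and_iff_left (le_total _ _)]
  have hinter : Icc a (Function.update b i c) ∩ Icc (Function.update a i c) b =
      Icc (Function.update a i c) (Function.update b i c) := by
    ext x
    rw [mem_inter_iff, hK, hK', hM]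
    grind
  rw [hunion]
  refine .union (isClosed_boxBoundary a b) isClosed_Icc isClosed_Icc ?_ ?_ ?_ ?_
  · rw [← hunion]
    exact fun x hx => hx.1
  all_goals rw [hinter]
  · convert h using 1
    ext x
    simp only [boxBoundary, mem_inter_iff, mem_ofPred_eq, hM]
    grind
  · convert h₁ using 1
    ext x
    simp only [boxBoundary, mem_inter_iff, mem_union, mem_ofPred_eq, hK, hM]
    grind
  · convert h₂ using 1
    ext x
    simp only [boxBoundary, mem_inter_iff, mem_union, mem_ofPred_eq, hK', hM]
    grind

end Box

section Grid

variable {ι Y : Type*} [TopologicalSpace Y]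

/-- The smallest face of the cubical grid with vertex set `ℤ^ι` that contains `x`. -/
def gridFace (x : ι → ℝ) : Set (ι → ℝ) :=
  Icc (fun i => (⌊x i⌋ : ℝ)) fun i => (⌈x i⌉ : ℝ)

/-- The dimension of the grid face `gridFace x`, that is the number of non-integral coordinates
of `x`. -/
noncomputable def gridFaceDim (x : ι → ℝ) : ℕ :=
  {i | ⌊x i⌋ < ⌈x i⌉}.ncard

/-- A carrier for the cubical grid: `φ` attains its largest value on a face in the relative
interior of that face, and this value fills the spheres that bound balls of the dimension of the
face. -/
structure IsGridCarrier (φ : (ι → ℝ) → Set Y) : Prop where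
  subset : ∀ x, ∀ y ∈ gridFace x, φ y ⊆ φ x
  fillsSphere : ∀ x, FillsSphere (gridFaceDim x) (φ x)

namespace IsGridCarrier

variable {φ : (ι → ℝ) → Set Y} {a b : ι → ℤ}

theorem extendsSelections_unit_box [Finite ι] (hφ : IsGridCarrier φ) (hab : a ≤ b)
    (hba : ∀ i, b i ≤ a i + 1) :
    ExtendsSelections φ (boxBoundary (fun i => (a i : ℝ)) fun i => (b i : ℝ))
      (Icc (fun i => (a i : ℝ)) fun i => (b i : ℝ)) := by
  have hcell {x : ι → ℝ} (hx : ∀ i, a i < b i → (a i : ℝ) < x i ∧ x i < b i)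
      (hx' : ∀ i, a i = b i → x i = a i) (i : ι) : ⌊x i⌋ = a i ∧ ⌈x i⌉ = b i := by
    rcases (hab i).lt_or_eq with h | h
    · have hb : b i = a i + 1 := le_antisymm (hba i) h
      have := hx i h
      rw [Int.floor_eq_iff, Int.ceil_eq_iff]
      push_cast [hb] at this ⊢
      refine ⟨⟨?_, ?_⟩, ?_, ?_⟩ <;> linarith
    · simp [hx' i h, h]
  let m : ι → ℝ := fun i => (a i + b i) / 2
  have hm : ∀ i, ⌊m i⌋ = a i ∧ ⌈m i⌉ = b i := hcell
    (fun i h => by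
      have : (a i : ℝ) < b i := Int.cast_lt.2 h
      constructor <;> simp only [m] <;> linarith)
    fun i h => by simp [m, h]
  have hmface : gridFace m = Icc (fun i => (a i : ℝ)) fun i => (b i : ℝ) := by
    simp only [gridFace, hm]
  have hmdim : FillsSphere {i | (a i : ℝ) < b i}.ncard (φ m) := by
    simpa only [gridFaceDim, hm, Int.cast_lt] using hφ.fillsSphere m
  refine (hmdim.extendsSelections_box fun i => Int.cast_le.2 (hab i)).of_const
    (fun x hx => hφ.subset m x (hmface ▸ hx.1)) fun x ⟨hx, hx'⟩ => hφ.subset x m ?_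
  have hxcell := hcell (x := x)
    (fun i h => by
      have h' : ¬(x i = a i ∨ x i = b i) := fun h' => hx' ⟨hx, i, Int.cast_lt.2 h, h'⟩
      rw [not_or] at h'
      exact ⟨(hx.1 i).lt_of_ne' h'.1, (hx.2 i).lt_of_ne h'.2⟩)
    fun i h => le_antisymm ((hx.2 i).trans_eq (by rw [h])) (hx.1 i)
  have hface : gridFace x = gridFace m := by simp only [gridFace, hm, hxcell]
  rw [hface]
  exact ⟨fun i => Int.floor_le _, fun i => Int.le_ceil _⟩

/-- Maps defined on the boundary of an integral box are extended face by face of the grid, by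
repeatedly cutting the box into two smaller ones. -/
theorem extendsSelections_box [Finite ι] (hφ : IsGridCarrier φ) (hab : a ≤ b) :
    ExtendsSelections φ (boxBoundary (fun i => (a i : ℝ)) fun i => (b i : ℝ))
      (Icc (fun i => (a i : ℝ)) fun i => (b i : ℝ)) := by
  classical
  have := Fintype.ofFinite ι
  induction hN : (Finset.Icc a b).card using Nat.strong_induction_on generalizing a b with
  | _ N ih =>
    by_cases hba : ∀ i, b i ≤ a i + 1
    · exact hφ.extendsSelections_unit_box hab hba
    · push Not at hba
      obtain ⟨i, hi⟩ := hba
      have hai : a i < a i + 1 := lt_add_one _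
      have ha : a < Function.update a i (a i + 1) := by simp
      have hb : Function.update b i (a i + 1) < b := by simpa using hi
      have hac : a ≤ Function.update b i (a i + 1) := le_update_iff.2 ⟨hai.le, fun j _ => hab j⟩
      have hcb : Function.update a i (a i + 1) ≤ b := update_le_iff.2 ⟨hi.le, fun j _ => hab j⟩
      have hcc : Function.update a i (a i + 1) ≤ Function.update b i (a i + 1) :=
        update_le_update_iff.2 ⟨le_rfl, fun j _ => hab j⟩
      have hcut (f : ι → ℤ) : (fun j => (Function.update f i (a i + 1) j : ℝ)) =
          Function.update (fun j => (f j : ℝ)) i ((a i + 1 : ℤ) : ℝ) :=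
        Function.comp_update (fun z : ℤ => (z : ℝ)) f i _
      refine .box_of_cut (i := i) (c := ((a i + 1 : ℤ) : ℝ)) (Int.cast_lt.2 hai) (Int.cast_lt.2 hi)
        ?_ ?_ ?_ <;> simp only [← hcut]
      · exact ih _ (hN ▸ Finset.card_lt_card (Finset.Icc_ssubset_Icc_left hab ha hb.le)) hcc rfl
      · exact ih _ (hN ▸ Finset.card_lt_card (Finset.Icc_ssubset_Icc_right hab le_rfl hb)) hac rfl
      · exact ih _ (hN ▸ Finset.card_lt_card (Finset.Icc_ssubset_Icc_left hab ha le_rfl)) hcb rfl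

end IsGridCarrier

/-- The full-dimensional cell of the cubical grid with lowest vertex `c`. -/
def unitCell (c : ι → ℤ) : Set (ι → ℝ) :=
  Icc (fun i => (c i : ℝ)) fun i => (c i : ℝ) + 1

theorem mem_unitCell_iff {c : ι → ℤ} {x : ι → ℝ} :
    x ∈ unitCell c ↔ ∀ i, c i ≤ ⌊x i⌋ ∧ ⌈x i⌉ ≤ c i + 1 := by
  simp only [unitCell, mem_Icc, Pi.le_def, ← forall_and, Int.le_floor, Int.ceil_le, Int.cast_add,
    Int.cast_one]

theorem mem_unitCell_floor (x : ι → ℝ) : x ∈ unitCell fun i => ⌊x i⌋ :=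
  mem_unitCell_iff.2 fun i => ⟨le_rfl, Int.ceil_le_floor_add_one (x i)⟩

theorem gridFace_subset_unitCell {c : ι → ℤ} {x : ι → ℝ} (hx : x ∈ unitCell c) :
    gridFace x ⊆ unitCell c := fun _ hy =>
  ⟨fun i => (Int.cast_le.2 (mem_unitCell_iff.1 hx i).1).trans (hy.1 i), fun i =>
    (hy.2 i).trans <| (Int.cast_le.2 (mem_unitCell_iff.1 hx i).2).trans_eq (by push_cast; rfl)⟩

theorem gridFaceDim_lt_of_mem_unitCell [Finite ι] {c c' : ι → ℤ} {x : ι → ℝ}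
    (hc : x ∈ unitCell c) (hc' : x ∈ unitCell c') (h : c ≠ c') : gridFaceDim x < Nat.card ι := by
  obtain ⟨i, hi⟩ := Function.ne_iff.1 h
  have h₁ := mem_unitCell_iff.1 hc i
  have h₂ := mem_unitCell_iff.1 hc' i
  rw [gridFaceDim, ← ncard_univ]
  refine ncard_lt_ncard (ssubset_univ_iff.2 fun huniv => ?_)
  have h₃ : ⌊x i⌋ < ⌈x i⌉ := huniv.ge (mem_univ i)
  omega

theorem dist_le_one_of_mem_unitCell [Fintype ι] {c : ι → ℤ} {x y : ι → ℝ} (hx : x ∈ unitCell c)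
    (hy : y ∈ unitCell c) : dist x y ≤ 1 :=
  (dist_pi_le_iff zero_le_one).2 fun i =>
    (Real.dist_le_of_mem_Icc ⟨hx.1 i, hx.2 i⟩ ⟨hy.1 i, hy.2 i⟩).trans_eq (add_sub_cancel_left _ _)

/-- Where cells with different values meet, the dimension has dropped below the maximum, so that
`A ∩ B` has to fill one dimension less than `A` and `B`. -/
theorem isGridCarrier_of_eq_or_eq [Finite ι] {A B : Set Y} {τ : (ι → ℤ) → Set Y}
    (hA : FillsSpheresBelow (Nat.card ι + 1) A) (hB : FillsSpheresBelow (Nat.card ι + 1) B)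
    (hAB : FillsSpheresBelow (Nat.card ι) (A ∩ B)) (hτ : ∀ c, τ c = A ∨ τ c = B) :
    IsGridCarrier fun x => {y | ∀ c, x ∈ unitCell c → y ∈ τ c} where
  subset x y hy z hz c hc := hz c (gridFace_subset_unitCell hc hy)
  fillsSphere x := by
    by_cases h : ∀ c, x ∈ unitCell c → τ c = τ fun i => ⌊x i⌋
    · have hval : {y | ∀ c, x ∈ unitCell c → y ∈ τ c} = τ fun i => ⌊x i⌋ := by
        ext y
        have hfloor := mem_unitCell_floor x
        grind
      have hdim : gridFaceDim x < Nat.card ι + 1 := Nat.lt_succ_of_le (ncard_le_card _)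
      rw [hval]
      rcases hτ fun i => ⌊x i⌋ with h' | h' <;> rw [h']
      exacts [hA _ hdim, hB _ hdim]
    · push Not at h
      obtain ⟨c, hc, hne⟩ := h
      have hval : {y | ∀ c, x ∈ unitCell c → y ∈ τ c} = A ∩ B := by
        ext y
        have hfloor := mem_unitCell_floor x
        grind
      rw [hval]
      exact hAB _ (gridFaceDim_lt_of_mem_unitCell hc (mem_unitCell_floor x) fun h => hne (h ▸ rfl))

theorem exists_nat_mapsTo_unitCell [Finite ι] {U V : Set Y} (hU : IsOpen U) (hV : IsOpen V)
    {L : Set (ι → ℝ)} (hL : IsCompact L) {F : (ι → ℝ) → Y} (hF : ContinuousOn F L)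
    (hFUV : MapsTo F L (U ∪ V)) :
    ∃ N : ℕ, 0 < N ∧ ∀ c, MapsTo F {x ∈ L | (N : ℝ) • x ∈ unitCell c} U ∨
      MapsTo F {x ∈ L | (N : ℝ) • x ∈ unitCell c} V := by
  have := Fintype.ofFinite ι
  obtain ⟨U', hU', hUU'⟩ := continuousOn_iff'.1 hF U hU
  obtain ⟨V', hV', hVV'⟩ := continuousOn_iff'.1 hF V hV
  obtain ⟨δ, hδ, hball⟩ := lebesgue_number_lemma_of_metric (c := fun b : Bool => cond b U' V') hL
    (by rintro (_ | _) <;> assumption) fun x hx => by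
      rcases hFUV hx with h | h
      · exact mem_iUnion.2 ⟨true, (hUU'.subset ⟨h, hx⟩).1⟩
      · exact mem_iUnion.2 ⟨false, (hVV'.subset ⟨h, hx⟩).1⟩
  obtain ⟨N, hN, hNδ⟩ := Real.exists_nat_pos_inv_lt hδ
  have hN' : (0 : ℝ) < N := Nat.cast_pos.2 hN
  have hclose {c : ι → ℤ} {x y : ι → ℝ} (hx : (N : ℝ) • x ∈ unitCell c)
      (hy : (N : ℝ) • y ∈ unitCell c) : y ∈ Metric.ball x δ := by
    have hdist : (N : ℝ) * dist y x ≤ 1 := by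
      simpa [dist_smul₀] using dist_le_one_of_mem_unitCell hy hx
    rw [Metric.mem_ball]
    exact ((le_inv_mul_iff₀ hN').2 hdist).trans_lt (by rwa [mul_one])
  refine ⟨N, hN, fun c => ?_⟩
  rcases {x ∈ L | (N : ℝ) • x ∈ unitCell c}.eq_empty_or_nonempty with he | ⟨x, hxL, hxc⟩
  · exact Or.inl (he ▸ mapsTo_empty _ _)
  · obtain ⟨b | b, hb⟩ := hball x hxL
    · exact Or.inr fun y hy => (hVV'.superset ⟨hb (hclose hxc hy.2), hy.1⟩).1
    · exact Or.inl fun y hy => (hUU'.superset ⟨hb (hclose hxc hy.2), hy.1⟩).1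

theorem FillsSphere.of_isOpen_cover {X U V : Set Y} {d : ℕ} (hU : IsOpen U) (hV : IsOpen V)
    (hX : X ⊆ U ∪ V) (hXU : FillsSpheresBelow (d + 1) (X ∩ U))
    (hXV : FillsSpheresBelow (d + 1) (X ∩ V)) (hXUV : FillsSpheresBelow d (X ∩ U ∩ (X ∩ V))) :
    FillsSphere d X := by
  rw [← Fintype.card_fin d, fillsSphere_card_iff_box (a := 0) (b := 1) fun _ => zero_lt_one]
  intro F hF hFX
  have hcompact : IsCompact (boxBoundary (0 : Fin d → ℝ) 1) :=
    isCompact_Icc.of_isClosed_subset (isClosed_boxBoundary 0 1) fun x hx => hx.1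
  obtain ⟨N, hN, hNF⟩ := exists_nat_mapsTo_unitCell hU hV hcompact hF fun x hx => hX (hFX x hx)
  have hN' : (0 : ℝ) < N := Nat.cast_pos.2 hN
  have hτ (c : Fin d → ℤ) : ∃ A, (A = X ∩ U ∨ A = X ∩ V) ∧
      MapsTo F {x ∈ boxBoundary 0 1 | (N : ℝ) • x ∈ unitCell c} A := by
    rcases hNF c with h | h
    · exact ⟨X ∩ U, .inl rfl, fun x hx => ⟨hFX x hx.1, h hx⟩⟩
    · exact ⟨X ∩ V, .inr rfl, fun x hx => ⟨hFX x hx.1, h hx⟩⟩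
  choose τ hτX hτF using hτ
  have hcarrier := isGridCarrier_of_eq_or_eq (by rwa [Nat.card_fin]) (by rwa [Nat.card_fin])
    (by rwa [Nat.card_fin]) hτX
  let e : (Fin d → ℝ) ≃ₜ (Fin d → ℝ) := Homeomorph.smulOfNeZero (N : ℝ) hN'.ne'
  have hbox : e '' Icc 0 1 = Icc (fun _ => ((0 : ℤ) : ℝ)) fun _ => ((N : ℤ) : ℝ) := by
    refine ((OrderIso.smulRight hN').image_Icc 0 1).trans ?_
    congr 1 <;> ext <;> simp
  have hboundary : e '' boxBoundary 0 1 =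
      boxBoundary (fun _ => ((0 : ℤ) : ℝ)) fun _ => ((N : ℤ) : ℝ) := by
    rw [← frontier_Icc_eq_boxBoundary (a := 0) (b := 1) fun _ => zero_lt_one, e.image_frontier,
      hbox, frontier_Icc_eq_boxBoundary fun _ => Int.cast_lt.2 (Nat.cast_pos.2 hN)]
  have hext := hcarrier.extendsSelections_box (a := fun _ => 0) (b := fun _ => (N : ℤ))
    fun _ => Nat.cast_nonneg N
  rw [← hbox, ← hboundary, extendsSelections_image_iff] at hext
  refine (hext F hF fun x hx c hc => hτF c ⟨hx, hc⟩).imp fun G => And.imp_right <| And.imp_left ?_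
  intro hG x hx
  have hmem := hG x hx _ (mem_unitCell_floor _)
  rcases hτX fun i => ⌊e x i⌋ with h | h <;> rw [h] at hmem <;> exact hmem.1

end Grid

section Deformation

theorem exists_extension_of_homotopy {E Y : Type*} [NormedAddCommGroup E] [NormedSpace ℝ E]
    [TopologicalSpace Y] {C : Set Y} {g : E → Y} {H : ℝ × E → Y}
    (hg : ContinuousOn g (closedBall 0 1)) (hgC : MapsTo g (closedBall 0 1) C)
    (hH : ContinuousOn H (Icc 0 1 ×ˢ sphere 0 1)) (hHC : MapsTo H (Icc 0 1 ×ˢ sphere 0 1) C)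
    (hgH : ∀ x ∈ sphere (0 : E) 1, g x = H (0, x)) :
    ∃ G : E → Y, ContinuousOn G (closedBall 0 1) ∧ MapsTo G (closedBall 0 1) C ∧
      ∀ x ∈ sphere (0 : E) 1, G x = H (1, x) := by
  let R : Set E := {x | 1 / 2 ≤ ‖x‖ ∧ ‖x‖ ≤ 1}
  have hball : closedBall (0 : E) 1 = closedBall 0 (1 / 2) ∪ R := by
    ext x
    simp only [mem_closedBall_zero_iff, mem_union, R, mem_ofPred_eq]
    grind
  have hR : IsClosed R := (isClosed_le continuous_const continuous_norm).inter
    (isClosed_le continuous_norm continuous_const)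
  let scale : E → E := fun x => (2 : ℝ) • x
  let collar : E → ℝ × E := fun x => (2 * ‖x‖ - 1, ‖x‖⁻¹ • x)
  have hscale : MapsTo scale (closedBall 0 (1 / 2)) (closedBall 0 1) := fun x hx => by
    rw [mem_closedBall_zero_iff] at hx ⊢
    rw [norm_smul, Real.norm_ofNat]
    linarith
  have hR0 : ∀ x ∈ R, ‖x‖ ≠ 0 := fun x hx => (one_half_pos.trans_le hx.1).ne'
  have hcollar : MapsTo collar R (Icc 0 1 ×ˢ sphere 0 1) := fun x hx =>
    ⟨⟨by linarith [hx.1], by linarith [hx.2]⟩, by simp [collar, norm_smul, hR0 x hx]⟩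
  have hcollar' : ContinuousOn collar R := by fun_prop (disch := exact hR0)
  obtain ⟨G, hG, hGg, hGH⟩ := exists_continuousOn_union_of_eqOn_inter isClosed_closedBall hR
    (hg.comp (continuous_const_smul 2).continuousOn hscale) (hH.comp hcollar' hcollar)
    fun x ⟨hx, hxR⟩ => by
      have hx2 : ‖x‖ = 1 / 2 := le_antisymm (mem_closedBall_zero_iff.1 hx) hxR.1
      simp [collar, hx2, hgH ((2 : ℝ) • x) (by simp [norm_smul, hx2])]
  refine ⟨G, hball ▸ hG, ?_, fun x hx => ?_⟩
  · rw [hball]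
    rintro x (hx | hx)
    · exact hGg hx ▸ hgC (hscale hx)
    · exact hGH hx ▸ hHC (hcollar hx)
  · have hx1 : ‖x‖ = 1 := mem_sphere_zero_iff_norm.1 hx
    rw [hGH ⟨by linarith, hx1.le⟩]
    norm_num [collar, hx1]

variable {Y Z : Type*} [TopologicalSpace Z] [AddCommGroup Y] [Module ℝ Y] [TopologicalSpace Y]
  [IsTopologicalAddGroup Y] [ContinuousSMul ℝ Y]

/-- `i ∘ r` is homotopic to the identity of `D` by a straight-line homotopy inside `D`. -/
theorem FillsSphere.of_segment_subset {A : Set Z} {D : Set Y} {i : Z → Y} {r : Y → Z} {d : ℕ}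
    (hA : FillsSphere d A) (hi : ContinuousOn i A) (hiD : MapsTo i A D) (hr : ContinuousOn r D)
    (hrA : MapsTo r D A) (hseg : ∀ x ∈ D, segment ℝ (i (r x)) x ⊆ D) : FillsSphere d D := by
  intro f hf hfD
  obtain ⟨g, hg, hgA, hgf⟩ := hA (r ∘ f) (hr.comp hf hfD) fun x hx => hrA (hfD x hx)
  let H : ℝ × EuclideanSpace ℝ (Fin d) → Y := fun z =>
    AffineMap.lineMap (i (r (f z.2))) (f z.2) z.1
  have hf' : ContinuousOn (fun z : ℝ × EuclideanSpace ℝ (Fin d) => f z.2)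
      (Icc 0 1 ×ˢ sphere 0 1) := hf.comp continuousOn_snd fun z hz => hz.2
  have hirf : ContinuousOn (fun z : ℝ × EuclideanSpace ℝ (Fin d) => i (r (f z.2)))
      (Icc 0 1 ×ˢ sphere 0 1) := (hi.comp hr hrA).comp hf' fun z hz => hfD z.2 hz.2
  have hH : ContinuousOn H (Icc 0 1 ×ˢ sphere 0 1) := hirf.lineMap hf' continuousOn_fst
  obtain ⟨G, hG, hGD, hGH⟩ := exists_extension_of_homotopy (hi.comp hg hgA)
    (fun x hx => hiD (hgA x hx)) hH
    (fun z hz => hseg _ (hfD z.2 hz.2) (lineMap_mem_segment ℝ _ _ hz.1)) fun x hx => by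
      simp [H, hgf hx]
  exact ⟨G, hG, hGD, fun x hx => by simp [hGH x hx, H]⟩

theorem fillsSphere_of_segment_subset {D : Set Y} {p : Y} (hp : p ∈ D)
    (hD : ∀ x ∈ D, segment ℝ p x ⊆ D) (d : ℕ) : FillsSphere d D := by
  have h : FillsSphere d (univ : Set Unit) := fun f _ _ =>
    ⟨fun _ => (), continuousOn_const, fun _ _ => trivial, fun _ _ => rfl⟩
  exact h.of_segment_subset (i := fun _ => p) (r := fun _ => ()) continuousOn_const
    (fun _ _ => hp) continuousOn_const (fun _ _ => trivial) hD

end Deformation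

section SimplicialComplex

variable {V : Type*}

/-- The faces of `K` that avoid the vertex `v`. -/
def vertexDeletion (K : Set (Finset V)) (v : V) : Set (Finset V) :=
  {s ∈ K | v ∉ s}

/-- The faces that avoid the vertex `v` and together with `v` form a face of `K`. -/
def vertexLink [DecidableEq V] (K : Set (Finset V)) (v : V) : Set (Finset V) :=
  {s | v ∉ s ∧ insert v s ∈ K}

/-- The projection of the standard simplex from the vertex `v` to the opposite facet. It is
meaningful only away from `v` itself, that is for `x v < 1`. -/
noncomputable def eraseVertex [DecidableEq V] (v : V) (x : V → ℝ) : V → ℝ :=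
  (1 - x v)⁻¹ • Function.update x v 0

theorem eraseVertex_self [DecidableEq V] (v : V) (x : V → ℝ) : eraseVertex v x v = 0 := by
  simp [eraseVertex]

theorem continuousOn_eraseVertex [DecidableEq V] (v : V) :
    ContinuousOn (eraseVertex v) {x | x v < 1} := by
  have hinv : ContinuousOn (fun x : V → ℝ => (1 - x v)⁻¹) {x | x v < 1} :=
    ContinuousOn.inv₀ (by fun_prop) fun x hx => (sub_pos.2 hx).ne'
  exact hinv.smul (continuous_id.update v continuous_const).continuousOn

theorem convex_setOf_apply_pos (v : V) : Convex ℝ {x : V → ℝ | 0 < x v} :=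
  convex_halfSpace_gt (LinearMap.proj (R := ℝ) (φ := fun _ : V => ℝ) v).isLinear 0

theorem convex_setOf_apply_lt_one (v : V) : Convex ℝ {x : V → ℝ | x v < 1} :=
  convex_halfSpace_lt (LinearMap.proj (R := ℝ) (φ := fun _ : V => ℝ) v).isLinear 1

variable [Fintype V]

/-- The face of the standard simplex spanned by the vertices in `s`. -/
def simplexFace (s : Finset V) : Set (V → ℝ) :=
  {x ∈ stdSimplex ℝ V | Function.support x ⊆ s}

/-- The geometric realization of the simplicial complex `K` as a union of faces of the standard
simplex. -/
def geometricRealization (K : Set (Finset V)) : Set (V → ℝ) :=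
  ⋃ s ∈ K, simplexFace s

variable {K : Set (Finset V)} {s : Finset V} {v : V} {x : V → ℝ}

theorem mem_geometricRealization : x ∈ geometricRealization K ↔ ∃ s ∈ K, x ∈ simplexFace s := by
  simp only [geometricRealization, mem_iUnion, exists_prop]

theorem simplexFace_subset_geometricRealization (hs : s ∈ K) :
    simplexFace s ⊆ geometricRealization K :=
  subset_biUnion_of_mem hs

theorem simplexFace_mono : Monotone (simplexFace : Finset V → Set (V → ℝ)) := fun _ _ hst _ hx =>
  ⟨hx.1, hx.2.trans (Finset.coe_subset.2 hst)⟩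

theorem convex_simplexFace (s : Finset V) : Convex ℝ (simplexFace s) := by
  intro x hx y hy a b ha hb hab
  refine ⟨convex_stdSimplex ℝ V hx.1 hy.1 ha hb hab, (Function.support_add _ _).trans ?_⟩
  exact union_subset ((Function.support_const_smul_subset a x).trans hx.2)
    ((Function.support_const_smul_subset b y).trans hy.2)

theorem single_mem_simplexFace [DecidableEq V] (hv : v ∈ s) : Pi.single v 1 ∈ simplexFace s :=
  ⟨single_mem_stdSimplex ℝ v, Pi.support_single_subset.trans (by simpa using hv)⟩

theorem mem_of_mem_simplexFace (hx : x ∈ simplexFace s) (hv : x v ≠ 0) : v ∈ s :=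
  hx.2 hv

theorem mem_geometricRealization_iff_support_eq (hK : IsLowerSet K) :
    x ∈ geometricRealization K ↔
      (∀ v, 0 ≤ x v) ∧ (∑ᶠ v, x v) = 1 ∧ ∃ s ∈ K, {v | x v ≠ 0} = ↑s := by
  rw [mem_geometricRealization, finsum_eq_sum_of_fintype, ← and_assoc]
  constructor
  · rintro ⟨s, hs, hx, hxs⟩
    let t : Finset V := (toFinite (Function.support x)).toFinset
    exact ⟨hx, t, hK (Finite.toFinset_subset.2 hxs) hs, (Finite.coe_toFinset _).symm⟩
  · rintro ⟨hx, s, hs, hxs⟩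
    exact ⟨s, hs, hx, hxs.subset⟩

theorem eraseVertex_mem_simplexFace [DecidableEq V] (hx : x ∈ simplexFace s) (hv : x v < 1) :
    eraseVertex v x ∈ simplexFace (s.erase v) := by
  have hv' : 0 < 1 - x v := sub_pos.2 hv
  refine ⟨⟨fun w => mul_nonneg (inv_nonneg.2 hv'.le) ?_, ?_⟩, ?_⟩
  · by_cases h : w = v
    · simp [h]
    · simpa [h] using hx.1.1 w
  · have hsum := hx.1.2
    rw [← Finset.add_sum_erase _ _ (Finset.mem_univ v), ← eq_sub_iff_add_eq'] at hsum
    simp only [eraseVertex, Pi.smul_apply, smul_eq_mul, ← Finset.mul_sum,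
      Finset.sum_update_of_mem (Finset.mem_univ v), zero_add, Finset.sdiff_singleton_eq_erase, hsum]
    exact inv_mul_cancel₀ hv'.ne'
  · refine (Function.support_const_smul_subset _ _).trans ?_
    rw [Function.support_update_zero, Finset.coe_erase]
    exact sdiff_subset_sdiff_left hx.2

theorem fillsSphere_geometricRealization_of_cone [DecidableEq V] (hne : K.Nonempty)
    (hcone : ∀ s ∈ K, insert v s ∈ K) (d : ℕ) : FillsSphere d (geometricRealization K) := by
  obtain ⟨s, hs⟩ := hne
  refine fillsSphere_of_segment_subset (p := Pi.single v 1) ?_ (fun x hx => ?_) d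
  · exact simplexFace_subset_geometricRealization (hcone s hs)
      (single_mem_simplexFace (Finset.mem_insert_self v s))
  · obtain ⟨t, ht, hxt⟩ := mem_geometricRealization.1 hx
    exact ((convex_simplexFace _).segment_subset
      (single_mem_simplexFace (Finset.mem_insert_self v t))
      (simplexFace_mono (Finset.subset_insert v t) hxt)).trans
      (simplexFace_subset_geometricRealization (hcone t ht))

theorem FillsSphere.geometricRealization_inter_lt_one (hK : IsLowerSet K) {d : ℕ}
    (h : FillsSphere d (geometricRealization (vertexDeletion K v))) :
    FillsSphere d (geometricRealization K ∩ {x | x v < 1}) := by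
  classical
  refine h.of_segment_subset (i := id) (r := eraseVertex v) continuousOn_id ?_
    ((continuousOn_eraseVertex v).mono inter_subset_right) ?_ ?_
  · intro x hx
    obtain ⟨s, ⟨hs, hvs⟩, hxs⟩ := mem_geometricRealization.1 hx
    have hxv : x v = 0 := by_contra fun h => hvs (mem_of_mem_simplexFace hxs h)
    exact ⟨simplexFace_subset_geometricRealization hs hxs, by simp [hxv]⟩
  · rintro x ⟨hx, hxv⟩
    obtain ⟨s, hs, hxs⟩ := mem_geometricRealization.1 hx
    have hdel : s.erase v ∈ vertexDeletion K v :=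
      ⟨hK (Finset.erase_subset v s) hs, Finset.notMem_erase v s⟩
    exact simplexFace_subset_geometricRealization hdel (eraseVertex_mem_simplexFace hxs hxv)
  · rintro x ⟨hx, hxv⟩
    obtain ⟨s, hs, hxs⟩ := mem_geometricRealization.1 hx
    have hrs := simplexFace_mono (Finset.erase_subset v s) (eraseVertex_mem_simplexFace hxs hxv)
    exact subset_inter
      (((convex_simplexFace s).segment_subset hrs hxs).trans
        (simplexFace_subset_geometricRealization hs))
      ((convex_setOf_apply_lt_one v).segment_subset (by simp [eraseVertex_self]) hxv)

theorem fillsSphere_geometricRealization_inter_pos (hv : {v} ∈ K) (d : ℕ) :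
    FillsSphere d (geometricRealization K ∩ {x | 0 < x v}) := by
  classical
  have hp : Pi.single v 1 ∈ {x : V → ℝ | 0 < x v} := by simp
  have hpK : Pi.single v 1 ∈ geometricRealization K :=
    simplexFace_subset_geometricRealization hv
      (single_mem_simplexFace (Finset.mem_singleton_self v))
  refine fillsSphere_of_segment_subset (mem_inter hpK hp) ?_ d
  · rintro x ⟨hx, hxv⟩
    obtain ⟨s, hs, hxs⟩ := mem_geometricRealization.1 hx
    exact subset_inter
      (((convex_simplexFace s).segment_subset
        (single_mem_simplexFace (mem_of_mem_simplexFace hxs hxv.ne')) hxs).trans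
        (simplexFace_subset_geometricRealization hs))
      ((convex_setOf_apply_pos v).segment_subset hp hxv)

/-- Away from `v`, the open star of `v` retracts to the link, copied halfway towards `v`. -/
theorem FillsSphere.geometricRealization_inter_lt_one_inter_pos [DecidableEq V] {d : ℕ}
    (h : FillsSphere d (geometricRealization (vertexLink K v))) :
    FillsSphere d (geometricRealization K ∩ {x | x v < 1} ∩
      (geometricRealization K ∩ {x | 0 < x v})) := by
  rw [← inter_inter_distrib_left]
  let i : (V → ℝ) → V → ℝ := fun y => midpoint ℝ y (Pi.single v 1)
  have hic : Continuous i := continuous_id.lineMap continuous_const continuous_const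
  have hi {y : V → ℝ} {s : Finset V} (hy : y ∈ simplexFace s) (hv : v ∈ s) :
      i y ∈ simplexFace s :=
    (convex_simplexFace s).midpoint_mem hy (single_mem_simplexFace hv)
  let O : Set (V → ℝ) := {x | x v < 1} ∩ {x | 0 < x v}
  have hiO {y : V → ℝ} (hy : y v = 0) : i y ∈ O := by
    norm_num [O, i, midpoint_eq_smul_add, hy]
  have hO : Convex ℝ O := (convex_setOf_apply_lt_one v).inter (convex_setOf_apply_pos v)
  refine h.of_segment_subset (i := i) (r := eraseVertex v) hic.continuousOn ?_
    ((continuousOn_eraseVertex v).mono fun x hx => hx.2.1) ?_ ?_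
  · intro y hy
    obtain ⟨s, ⟨hvs, hs⟩, hys⟩ := mem_geometricRealization.1 hy
    exact ⟨simplexFace_subset_geometricRealization hs
      (hi (simplexFace_mono (Finset.subset_insert v s) hys) (Finset.mem_insert_self v s)),
      hiO (by_contra fun h => hvs (mem_of_mem_simplexFace hys h))⟩
  · rintro x ⟨hx, hxO⟩
    obtain ⟨s, hs, hxs⟩ := mem_geometricRealization.1 hx
    have hvs : v ∈ s := mem_of_mem_simplexFace hxs hxO.2.ne'
    have hlink : s.erase v ∈ vertexLink K v :=
      ⟨Finset.notMem_erase v s, (Finset.insert_erase hvs).symm ▸ hs⟩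
    exact simplexFace_subset_geometricRealization hlink (eraseVertex_mem_simplexFace hxs hxO.1)
  · rintro x ⟨hx, hxO⟩
    obtain ⟨s, hs, hxs⟩ := mem_geometricRealization.1 hx
    have hvs : v ∈ s := mem_of_mem_simplexFace hxs hxO.2.ne'
    have hrs := simplexFace_mono (Finset.erase_subset v s) (eraseVertex_mem_simplexFace hxs hxO.1)
    exact subset_inter
      (((convex_simplexFace s).segment_subset (hi hrs hvs) hxs).trans
        (simplexFace_subset_geometricRealization hs))
      (hO.segment_subset (hiO (eraseVertex_self v x)) hxO)

theorem FillsSpheresBelow.geometricRealization_of_vertex [DecidableEq V] (hK : IsLowerSet K)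
    (hv : {v} ∈ K) {m : ℕ}
    (hdel : FillsSpheresBelow (m + 1) (geometricRealization (vertexDeletion K v)))
    (hlink : FillsSpheresBelow m (geometricRealization (vertexLink K v))) :
    FillsSpheresBelow (m + 1) (geometricRealization K) := fun d hd =>
  FillsSphere.of_isOpen_cover (U := {x : V → ℝ | x v < 1}) (V := {x : V → ℝ | 0 < x v})
    (isOpen_lt (continuous_apply v) continuous_const)
    (isOpen_lt continuous_const (continuous_apply v))
    (fun x _ => (lt_or_ge (x v) 1).imp id zero_lt_one.trans_le)
    (fun d' hd' => (hdel d' (by omega)).geometricRealization_inter_lt_one hK)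
    (fun d' _ => fillsSphere_geometricRealization_inter_pos hv d')
    fun d' hd' => (hlink d' (by omega)).geometricRealization_inter_lt_one_inter_pos

end SimplicialComplex

section Connectivity

variable {V : Type*} [Fintype V] {K : Set (Finset V)}

theorem FillsSpheresBelow.isNConnected_realization (hK : IsLowerSet K) {m : ℕ} {n : ℤ}
    (hn : n + 2 ≤ m) (h : FillsSpheresBelow m (geometricRealization K)) :
    IsNConnected n (realization K) := by
  refine ⟨fun hn' => ?_, fun i hi f => ?_⟩
  · obtain ⟨g, -, hg, -⟩ := h 0 (by omega) 0 continuousOn_const fun x hx => by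
      simp [Subsingleton.elim x 0] at hx
    exact ⟨⟨g 0, (mem_geometricRealization_iff_support_eq hK).1 (hg 0 (by simp))⟩⟩
  · classical
    let F : EuclideanSpace ℝ (Fin (i + 1)) → V → ℝ := fun y =>
      if hy : y ∈ sphere 0 1 then (f ⟨y, hy⟩).1 else 0
    have hFf (y : sphere (0 : EuclideanSpace ℝ (Fin (i + 1))) 1) : F y = (f y).1 := dif_pos y.2
    have hF : ContinuousOn F (sphere 0 1) := continuousOn_iff_continuous_domRestrict.2
      ((continuous_subtype_val.comp f.continuous).congr fun y => (hFf y).symm)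
    obtain ⟨g, hg, hgK, hgF⟩ := h (i + 1) (by omega) F hF fun y hy => by
      rw [hFf ⟨y, hy⟩]
      exact (mem_geometricRealization_iff_support_eq hK).2 (f ⟨y, hy⟩).2
    refine ⟨⟨fun y => ⟨g y, (mem_geometricRealization_iff_support_eq hK).1 (hgK y y.2)⟩,
      (continuousOn_iff_continuous_domRestrict.1 hg).subtype_mk _⟩, fun y => ?_⟩
    exact Subtype.ext ((hgF y.2).trans (hFf y))

end Connectivity

section IndependenceComplex

variable {V : Type*} {G : SimpleGraph V} {S : Set V} {v : V}

/-- The faces of the independence complex of the subgraph of `G` induced on `S`, as sets of vertices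
of `G`. -/
def indepFacesOn (G : SimpleGraph V) (S : Set V) : Set (Finset V) :=
  {s ∈ indepFaces G | ↑s ⊆ S}

theorem indepFacesOn_univ (G : SimpleGraph V) : indepFacesOn G univ = indepFaces G := by
  simp [indepFacesOn]

theorem isLowerSet_indepFacesOn (G : SimpleGraph V) (S : Set V) : IsLowerSet (indepFacesOn G S) :=
  fun _ _ hts hs => ⟨fun a ha b hb => hs.1 a (hts ha) b (hts hb),
    (Finset.coe_subset.2 hts).trans hs.2⟩

theorem singleton_mem_indepFacesOn (hv : v ∈ S) : {v} ∈ indepFacesOn G S := by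
  simp [indepFacesOn, indepFaces, hv]

theorem insert_mem_indepFacesOn_iff [DecidableEq V] {s : Finset V} :
    insert v s ∈ indepFacesOn G S ↔
      v ∈ S ∧ s ∈ indepFacesOn G S ∧ ∀ w ∈ s, ¬ G.Adj v w := by
  simp only [indepFacesOn, indepFaces, mem_ofPred_eq, Finset.forall_mem_insert, Finset.coe_insert,
    insert_subset_iff, G.irrefl, G.adj_comm _ v]
  grind

theorem vertexDeletion_indepFacesOn (G : SimpleGraph V) (S : Set V) (v : V) :
    vertexDeletion (indepFacesOn G S) v = indepFacesOn G (S \ {v}) := by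
  ext s
  simp only [vertexDeletion, indepFacesOn, mem_ofPred_eq, subset_sdiff, disjoint_singleton_right,
    Finset.mem_coe, and_assoc]

theorem vertexLink_indepFacesOn [DecidableEq V] (hv : v ∈ S) :
    vertexLink (indepFacesOn G S) v = indepFacesOn G (S \ G.closedNbhd v) := by
  ext s
  simp only [vertexLink, mem_ofPred_eq, insert_mem_indepFacesOn_iff]
  simp only [indepFacesOn, closedNbhd, mem_ofPred_eq, subset_sdiff, Set.disjoint_left,
    Finset.mem_coe, mem_insert_iff, mem_neighborSet]
  grind

variable [Fintype V]

theorem fillsSphere_indepFacesOn_of_isolated (hv : v ∈ S) (hiso : ∀ w ∈ S, ¬ G.Adj v w) (d : ℕ) :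
    FillsSphere d (geometricRealization (indepFacesOn G S)) := by
  classical
  refine fillsSphere_geometricRealization_of_cone (v := v) ⟨_, singleton_mem_indepFacesOn hv⟩ ?_ d
  exact fun s hs => insert_mem_indepFacesOn_iff.2 ⟨hv, hs, fun w hw => hiso w (hs.2 hw)⟩

/-- The vertices of a clique `W` are deleted one after the other. As `W` lies in the closed
neighborhood of each of its vertices, the links are the same for every order of deletion. -/
theorem FillsSpheresBelow.indepFacesOn_of_isClique {m : ℕ} {W : Set V} (hW : G.IsClique W)
    (hWS : W ⊆ S)
    (hlink : ∀ v ∈ W,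
      FillsSpheresBelow m (geometricRealization (indepFacesOn G (S \ G.closedNbhd v))))
    (hdel : FillsSpheresBelow (m + 1) (geometricRealization (indepFacesOn G (S \ W)))) :
    FillsSpheresBelow (m + 1) (geometricRealization (indepFacesOn G S)) := by
  classical
  induction W, W.toFinite using Set.Finite.induction_on generalizing S with
  | empty => simpa using hdel
  | @insert v W hvW _ ih =>
    obtain ⟨hvS, hWS⟩ := insert_subset_iff.1 hWS
    obtain ⟨hW, hadj⟩ := isClique_insert.1 hW
    have hvS' : FillsSpheresBelow (m + 1) (geometricRealization (indepFacesOn G (S \ {v}))) := by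
      refine ih hW (subset_sdiff_singleton hWS hvW) (fun w hw => ?_) ?_
      · have hvw : {v} ⊆ G.closedNbhd w :=
          singleton_subset_iff.2 (.inr (hadj w hw (ne_of_mem_of_not_mem hw hvW).symm).symm)
        rw [sdiff_sdiff, union_eq_self_of_subset_left hvw]
        exact hlink w (.inr hw)
      · rwa [sdiff_sdiff, singleton_union]
    refine .geometricRealization_of_vertex (v := v) (isLowerSet_indepFacesOn G S)
      (singleton_mem_indepFacesOn hvS) ?_ ?_
    · rwa [vertexDeletion_indepFacesOn]
    · rw [vertexLink_indepFacesOn hvS]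
      exact hlink v (.inl rfl)

end IndependenceComplex

section CircGraph

variable {n k : ℕ}

theorem circGraphC_adj {x y : Fin n} :
    (circGraphC n k).Adj x y ↔
      ((x : ℕ) < y ∧ ((y : ℕ) - x < k ∨ n + x - y < k)) ∨
        ((y : ℕ) < x ∧ ((x : ℕ) - y < k ∨ n + y - x < k)) := by
  simp only [circGraphC, fromRel_adj]
  omega

theorem notMem_closedNbhd_circGraphC (hk : 1 ≤ k) {x y : Fin n} :
    y ∉ (circGraphC n k).closedNbhd x ↔
      ((x : ℕ) + k ≤ y ∧ (y : ℕ) + k ≤ n + x) ∨ ((y : ℕ) + k ≤ x ∧ (x : ℕ) + k ≤ n + y) := by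
  simp only [closedNbhd, mem_insert_iff, mem_neighborSet, circGraphC_adj, Fin.ext_iff]
  omega

theorem isClique_circGraphC (n k a : ℕ) :
    (circGraphC n k).IsClique (Fin.val ⁻¹' Ico a (a + k)) := by
  rintro x ⟨hax, hxk⟩ y ⟨hay, hyk⟩ hxy
  rw [circGraphC_adj]
  omega

/-- Delete the vertices between `a` and `a + k`. This isolates `a`, and the link of a deleted vertex
is an interval that is shorter by at most `2 * k - 1`. -/
theorem fillsSpheresBelow_interval_circGraphC (hk : 1 ≤ k) {b : ℕ} (hb : b ≤ n) (e : ℕ) {a : ℕ}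
    (hab : b + k ≤ n + 1 + a) (he : a + e * (2 * k - 1) < b + (2 * k - 1)) :
    FillsSpheresBelow e
      (geometricRealization (indepFacesOn (circGraphC n k) (Fin.val ⁻¹' Ico a b))) := by
  induction e generalizing a with
  | zero => exact fun d hd => (Nat.not_lt_zero d hd).elim
  | succ e ih =>
    rw [Nat.succ_mul] at he
    let W : Set (Fin n) := Fin.val ⁻¹' Ico (a + 1) (min b (a + k))
    have hW : (circGraphC n k).IsClique W :=
      (isClique_circGraphC n k a).subset (preimage_mono (Ico_subset_Ico (by omega) (by omega)))
    refine .indepFacesOn_of_isClique hW (preimage_mono (Ico_subset_Ico (by omega) (by omega)))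
      (fun v hv => ?_) ?_
    · have hlink : Fin.val ⁻¹' Ico a b \ (circGraphC n k).closedNbhd v =
          Fin.val ⁻¹' Ico (v + k) b := by
        ext x
        simp only [W, mem_sdiff, mem_preimage, mem_Ico, notMem_closedNbhd_circGraphC hk] at hv ⊢
        omega
      simp only [W, mem_preimage, mem_Ico] at hv
      exact hlink ▸ ih (by omega) (by omega)
    · refine fun d _ => fillsSphere_indepFacesOn_of_isolated (v := ⟨a, by omega⟩) ?_ ?_ d
      · simp only [W, mem_sdiff, mem_preimage, mem_Ico]
        omega
      · simp only [W, mem_sdiff, mem_preimage, mem_Ico, circGraphC_adj]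
        omega

theorem fillsSpheresBelow_circGraphC (hk : 2 ≤ k) (n : ℕ) :
    FillsSpheresBelow ((n + 1) / (2 * k - 1))
      (geometricRealization (indepFaces (circGraphC n k))) := by
  have hk1 : 1 ≤ k := by omega
  have hle := Nat.div_mul_le_self (n + 1) (2 * k - 1)
  cases hm : (n + 1) / (2 * k - 1) with
  | zero => exact fun d hd => (Nat.not_lt_zero d hd).elim
  | succ e =>
    rw [hm, Nat.succ_mul] at hle
    let W : Set (Fin n) := Fin.val ⁻¹' Ico 0 (k - 1)
    have hW : (circGraphC n k).IsClique W :=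
      (isClique_circGraphC n k 0).subset (preimage_mono (Ico_subset_Ico (by omega) (by omega)))
    rw [← indepFacesOn_univ]
    refine .indepFacesOn_of_isClique hW (subset_univ W) (fun v hv => ?_) ?_
    · have hlink : univ \ (circGraphC n k).closedNbhd v =
          Fin.val ⁻¹' Ico (v + k) (n + v + 1 - k) := by
        ext x
        simp only [W, mem_sdiff, mem_univ, true_and, mem_preimage, mem_Ico,
          notMem_closedNbhd_circGraphC hk1] at hv ⊢
        omega
      simp only [W, mem_preimage, mem_Ico] at hv
      rw [hlink]
      exact fillsSpheresBelow_interval_circGraphC hk1 (by omega) e (by omega) (by omega)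
    · have hdel : univ \ W = Fin.val ⁻¹' Ico (k - 1) n := by
        ext x
        simp only [W, mem_sdiff, mem_univ, true_and, mem_preimage, mem_Ico]
        omega
      rw [hdel]
      exact fillsSpheresBelow_interval_circGraphC hk1 le_rfl (e + 1) (by omega)
        (by rw [Nat.succ_mul]; omega)

end CircGraph

theorem indComplex_circGraph_connectivity_general {n k : ℕ} (hk : 2 ≤ k) :
    IsNConnected ⌊((n : ℚ) + 1) / (2 * k - 1) - 2⌋
      (realization (indepFaces (circGraphC n k))) := by
  have hlower : IsLowerSet (indepFaces (circGraphC n k)) :=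
    indepFacesOn_univ (circGraphC n k) ▸ isLowerSet_indepFacesOn _ _
  have hfloor : ⌊((n : ℚ) + 1) / (2 * k - 1) - 2⌋ = ((n + 1) / (2 * k - 1) : ℕ) - 2 := by
    have hcast : ((n : ℚ) + 1) / (2 * k - 1) = ((n + 1 : ℕ) : ℚ) / ((2 * k - 1 : ℕ) : ℚ) := by
      rw [Nat.cast_sub (by omega)]
      push_cast
      rfl
    rw [Int.floor_sub_ofNat, hcast, ← Int.natCast_floor_eq_floor (by positivity),
      Nat.floor_div_eq_div]
  exact (fillsSpheresBelow_circGraphC hk n).isNConnected_realization hlower (by omega)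

/-- If `k ≥ 2` and `n ≥ 6(k-1)`, then `Ind(C^k_n)` is
`⌊(n+1)/(2k-1) - 2⌋`-connected. -/
theorem indComplex_circGraph_connectivity {n k : ℕ} (hk : 2 ≤ k)
    (hn : 6 * (k - 1) ≤ n) :
    IsNConnected ⌊((n : ℚ) + 1) / (2 * k - 1) - 2⌋
      (realization (indepFaces (circGraphC n k))) :=
  indComplex_circGraph_connectivity_general hk
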